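/- Let q be a (sufficiently smooth) solution of the barotropic vorticity equation q_t + J(ψ,q) + βψ_x = f + νΔq − rq, q = Δψ, with boundary conditions q = 0, ψ = 0 on ∂D and initial condition q(·,·,0) = q₀. Then for all t ≥ 0, ‖q(t)‖² ≤ ‖q₀‖² e^{−2αt} + (1/r) ∫₀ᵗ ‖f(s)‖² e^{2α(s−t)} ds, where α = r/2 + πν/|D| − (|β|/2)(|D|/π + 1). -/

import Mathlib

open MeasureTheory Real Filter Topology

/-- Partial derivative in the `x` direction. -/
noncomputable def pdx (u : ℝ × ℝ → ℝ) (p : ℝ × ℝ) : ℝ := fderiv ℝ u p (1, 0)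

/-- Partial derivative in the `y` direction. -/
noncomputable def pdy (u : ℝ × ℝ → ℝ) (p : ℝ × ℝ) : ℝ := fderiv ℝ u p (0, 1)

/-- The Jacobian operator `J(u,v) = u_x v_y - u_y v_x`. -/
noncomputable def jac (u v : ℝ × ℝ → ℝ) (p : ℝ × ℝ) : ℝ :=
  pdx u p * pdy v p - pdy u p * pdx v p

/-- The Laplacian `Δu = u_xx + u_yy`. -/
noncomputable def lap (u : ℝ × ℝ → ℝ) (p : ℝ × ℝ) : ℝ :=
  pdx (pdx u) p + pdy (pdy u) p

/-- The squared `L²(D)` norm `‖u‖² = ∫_D u² dxdy`. -/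
noncomputable def l2sq (D : Set (ℝ × ℝ)) (u : ℝ × ℝ → ℝ) : ℝ :=
  ∫ p in D, (u p) ^ 2

/-- The `L²(D)` norm. -/
noncomputable def l2norm (D : Set (ℝ × ℝ)) (u : ℝ × ℝ → ℝ) : ℝ :=
  Real.sqrt (l2sq D u)

/-- The squared `L²(D)` norm of the gradient, `‖∇u‖² = ∫_D |∇u|² dxdy`. -/
noncomputable def gradsq (D : Set (ℝ × ℝ)) (u : ℝ × ℝ → ℝ) : ℝ :=
  ∫ p in D, ((pdx u p) ^ 2 + (pdy u p) ^ 2)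

/-- The `L²(D)` norm of the gradient. -/
noncomputable def gradNorm (D : Set (ℝ × ℝ)) (u : ℝ × ℝ → ℝ) : ℝ :=
  Real.sqrt (gradsq D u)

/-- The area `|D|` of the domain. -/
noncomputable def area (D : Set (ℝ × ℝ)) : ℝ := (volume D).toReal

/-- The constant `α = r/2 + πν/|D| - (|β|/2)(|D|/π + 1)`. -/
noncomputable def alphaConst (D : Set (ℝ × ℝ)) (β ν r : ℝ) : ℝ :=
  r / 2 + π * ν / area D - |β| / 2 * (area D / π + 1)

/-- A space-time field that is smooth jointly in time and space. -/
def SmoothField (u : ℝ → ℝ × ℝ → ℝ) : Prop :=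
  ContDiff ℝ (⊤ : ℕ∞) (Function.uncurry u)

/-- A space-time field that is mean-square integrable in space and time
(on the time interval `[0,∞)` and the spatial domain `D`). -/
def MeanSquareIntegrable (D : Set (ℝ × ℝ)) (f : ℝ → ℝ × ℝ → ℝ) : Prop :=
  (∀ t, 0 ≤ t → Integrable (fun p => (f t p) ^ 2) (volume.restrict D)) ∧
  (∀ T, 0 < T → IntervalIntegrable (fun t => l2sq D (f t)) volume 0 T)

/-- `SolvesBVE D β ν r q ψ f g` says that the vorticity `q`, with streamfunction `ψ`,
solves the barotropic vorticity equation
`q_t + J(ψ,q) + β ψ_x = f + ν Δq - r q + g` on the domain `D` for all times `t ≥ 0`,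
with the relation `q = Δψ` and zero boundary conditions `q = 0`, `ψ = 0` on `∂D`.
The extra field `g` is an additional forcing term (e.g. a subgrid-scale stress,
a stochastic parameterization, or `0`). -/
def SolvesBVE (D : Set (ℝ × ℝ)) (β ν r : ℝ) (q ψ f g : ℝ → ℝ × ℝ → ℝ) : Prop :=
  (∀ t, 0 ≤ t → ∀ p ∈ D, q t p = lap (ψ t) p) ∧
  (∀ t, 0 ≤ t → ∀ p ∈ frontier D, q t p = 0 ∧ ψ t p = 0) ∧
  (∀ t, 0 ≤ t → ∀ p ∈ D,
    deriv (fun s => q s p) t + jac (ψ t) (q t) p + β * pdx (ψ t) p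
      = f t p + ν * lap (q t) p - r * q t p + g t p)

/-! ### Functions of one variable vanishing on the boundary of an open set -/

lemma exists_Ioo_subset_of_mem_open {O : Set ℝ} (hO : IsOpen O) (hb : Bornology.IsBounded O)
    {x : ℝ} (hx : x ∈ O) :
    ∃ a b, x ∈ Set.Ioo a b ∧ Set.Ioo a b ⊆ O ∧ a ∉ O ∧ b ∉ O := by
  obtain ⟨R, hR⟩ := hb.subset_closedBall 0
  have hOR : ∀ y ∈ O, |y| ≤ R := fun y hy => by simpa using hR hy
  have hxR := abs_le.1 (hOR x hx)
  have hgt : R + 1 ∉ O := fun h => by have := (abs_le.1 (hOR _ h)).2; linarith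
  have hlt : -R - 1 ∉ O := fun h => by have := (abs_le.1 (hOR _ h)).1; linarith
  have hbdd : BddBelow (Oᶜ ∩ Set.Ici x) := ⟨x, fun _ hy => hy.2⟩
  have hbdd' : BddAbove (Oᶜ ∩ Set.Iic x) := ⟨x, fun _ hy => hy.2⟩
  have hB := (hO.isClosed_compl.inter isClosed_Ici).csInf_mem
    ⟨R + 1, hgt, by rw [Set.mem_Ici]; linarith⟩ hbdd
  have hA := (hO.isClosed_compl.inter isClosed_Iic).csSup_mem
    ⟨-R - 1, hlt, by rw [Set.mem_Iic]; linarith⟩ hbdd'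
  refine ⟨sSup (Oᶜ ∩ Set.Iic x), sInf (Oᶜ ∩ Set.Ici x), ⟨?_, ?_⟩, ?_, hA.1, hB.1⟩
  · exact lt_of_le_of_ne hA.2 fun h => hA.1 (by rw [h]; exact hx)
  · exact lt_of_le_of_ne hB.2 fun h => hB.1 (by rw [← h]; exact hx)
  · rintro y ⟨hy1, hy2⟩
    by_contra hy
    rcases le_total x y with h | h
    · exact hy2.not_ge (csInf_le hbdd ⟨hy, h⟩)
    · exact hy1.not_ge (le_csSup hbdd' ⟨hy, h⟩)

lemma endpoints_mem_frontier {O : Set ℝ} (hO : IsOpen O) {a b : ℝ} (hab : a < b)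
    (h : Set.Ioo a b ⊆ O) (ha : a ∉ O) (hb : b ∉ O) : a ∈ frontier O ∧ b ∈ frontier O := by
  have hcl : Set.Icc a b ⊆ closure O := closure_Ioo hab.ne ▸ closure_mono h
  rw [hO.frontier_eq]
  exact ⟨⟨hcl (Set.left_mem_Icc.2 hab.le), ha⟩, ⟨hcl (Set.right_mem_Icc.2 hab.le), hb⟩⟩

lemma Continuous.integrableOn_of_isBounded {X : Type*} [MeasurableSpace X] [MetricSpace X]
    [ProperSpace X] [OpensMeasurableSpace X] {μ : Measure X} [IsFiniteMeasureOnCompacts μ]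
    {g : X → ℝ} (hg : Continuous g) {s : Set X} (hs : Bornology.IsBounded s) :
    IntegrableOn g s μ :=
  (hg.continuousOn.integrableOn_compact hs.isCompact_closure).mono_set subset_closure

lemma setIntegral_Ioo_deriv {u u' : ℝ → ℝ} (hu : ∀ x, HasDerivAt u (u' x) x)
    (hu' : Continuous u') {a b : ℝ} (hab : a ≤ b) : ∫ x in Set.Ioo a b, u' x = u b - u a := by
  rw [← integral_Ioc_eq_integral_Ioo, ← intervalIntegral.integral_of_le hab]
  exact intervalIntegral.integral_eq_sub_of_hasDerivAt (fun x _ => hu x)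
    (hu'.intervalIntegrable _ _)

lemma setIntegral_deriv_eq_zero_of_frontier {O : Set ℝ} (hO : IsOpen O)
    (hb : Bornology.IsBounded O) {u u' : ℝ → ℝ} (hu : ∀ x, HasDerivAt u (u' x) x)
    (hu' : Continuous u') (h0 : ∀ x ∈ frontier O, u x = 0) : ∫ x in O, u' x = 0 := by
  let S : Set (ℝ × ℝ) := {c | c.1 < c.2 ∧ Set.Ioo c.1 c.2 ⊆ O ∧ c.1 ∉ O ∧ c.2 ∉ O}
  have hdisj : S.PairwiseDisjoint fun c => Set.Ioo c.1 c.2 := by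
    rintro ⟨a, b⟩ ⟨hab, hsub, ha, hb⟩ ⟨c, d⟩ ⟨hcd, hsub', hc, hd⟩ hne
    simp only [Function.onFun] at *
    rw [Set.disjoint_left]
    rintro z ⟨hz1, hz2⟩ ⟨hz3, hz4⟩
    apply hne
    have h1 : c ≤ a := not_lt.1 fun h => hc (hsub ⟨h, hz3.trans hz2⟩)
    have h2 : a ≤ c := not_lt.1 fun h => ha (hsub' ⟨h, hz1.trans hz4⟩)
    have h3 : d ≤ b := not_lt.1 fun h => hb (hsub' ⟨hz3.trans hz2, h⟩)
    have h4 : b ≤ d := not_lt.1 fun h => hd (hsub ⟨hz1.trans hz4, h⟩)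
    rw [le_antisymm h2 h1, le_antisymm h4 h3]
  have hcount : S.Countable :=
    hdisj.countable_of_isOpen (fun _ _ => isOpen_Ioo) fun c hc => Set.nonempty_Ioo.2 hc.1
  have : Countable S := hcount.to_subtype
  have hunion : O = ⋃ c : S, Set.Ioo c.1.1 c.1.2 := by
    ext x
    simp only [Set.mem_iUnion]
    constructor
    · intro hx
      obtain ⟨a, b, hxab, hsub, ha, hb'⟩ := exists_Ioo_subset_of_mem_open hO hb hx
      exact ⟨⟨(a, b), hxab.1.trans hxab.2, hsub, ha, hb'⟩, hxab⟩
    · rintro ⟨c, hx⟩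
      exact c.2.2.1 hx
  have h_int : IntegrableOn u' O := hu'.integrableOn_of_isBounded hb
  rw [hunion] at h_int
  conv_lhs => rw [hunion]
  rw [integral_iUnion (s := fun c : S => Set.Ioo c.1.1 c.1.2) (fun _ => measurableSet_Ioo)
    (fun c d hcd => hdisj c.2 d.2 (fun h => hcd (Subtype.ext h))) h_int]
  refine (tsum_congr fun c => ?_).trans tsum_zero
  obtain ⟨hab, hsub, ha, hb'⟩ := c.2
  have hfr := endpoints_mem_frontier hO hab hsub ha hb'
  rw [setIntegral_Ioo_deriv hu hu' hab.le, h0 _ hfr.1, h0 _ hfr.2, sub_zero]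

lemma two_mul_abs_le_setIntegral_abs_deriv {O : Set ℝ} (hO : IsOpen O)
    (hb : Bornology.IsBounded O) {u u' : ℝ → ℝ} (hu : ∀ x, HasDerivAt u (u' x) x)
    (hu' : Continuous u') (h0 : ∀ x ∈ frontier O, u x = 0) {x : ℝ} (hx : x ∈ O) :
    2 * |u x| ≤ ∫ y in O, |u' y| := by
  obtain ⟨a, b, ⟨hax, hxb⟩, hsub, ha, hb'⟩ := exists_Ioo_subset_of_mem_open hO hb hx
  have hfr := endpoints_mem_frontier hO (hax.trans hxb) hsub ha hb'
  have hI : ∀ c d, IntervalIntegrable (fun y => |u' y|) volume c d :=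
    fun c d => hu'.abs.intervalIntegrable c d
  have h1 : |u x| ≤ ∫ y in a..x, |u' y| := by
    have h : ∫ y in a..x, u' y = u x := by
      rw [intervalIntegral.integral_eq_sub_of_hasDerivAt (fun x _ => hu x)
        (hu'.intervalIntegrable _ _), h0 _ hfr.1, sub_zero]
    rw [← h]
    exact intervalIntegral.abs_integral_le_integral_abs hax.le
  have h2 : |u x| ≤ ∫ y in x..b, |u' y| := by
    have h : ∫ y in x..b, u' y = -u x := by
      rw [intervalIntegral.integral_eq_sub_of_hasDerivAt (fun x _ => hu x)
        (hu'.intervalIntegrable _ _), h0 _ hfr.2, zero_sub]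
    rw [← abs_neg, ← h]
    exact intervalIntegral.abs_integral_le_integral_abs hxb.le
  have h3 : ∫ y in a..b, |u' y| ≤ ∫ y in O, |u' y| := by
    rw [intervalIntegral.integral_of_le (hax.trans hxb).le, integral_Ioc_eq_integral_Ioo]
    exact setIntegral_mono_set (hu'.abs.integrableOn_of_isBounded hb)
      (Eventually.of_forall fun _ => abs_nonneg _) hsub.eventuallyLE
  rw [← intervalIntegral.integral_add_adjacent_intervals (hI a x) (hI x b)] at h3
  linarith

/-! ### Partial derivatives -/

section PartialDerivatives

variable {u v : ℝ × ℝ → ℝ}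

lemma ContDiff.pdx (hu : ContDiff ℝ (⊤ : ℕ∞) u) : ContDiff ℝ (⊤ : ℕ∞) (pdx u) :=
  (hu.fderiv_right (m := (⊤ : ℕ∞)) (by simp)).clm_apply contDiff_const

lemma ContDiff.pdy (hu : ContDiff ℝ (⊤ : ℕ∞) u) : ContDiff ℝ (⊤ : ℕ∞) (pdy u) :=
  (hu.fderiv_right (m := (⊤ : ℕ∞)) (by simp)).clm_apply contDiff_const

lemma hasDerivAt_slice_fst (hu : ContDiff ℝ (⊤ : ℕ∞) u) (x y : ℝ) :
    HasDerivAt (fun s => u (s, y)) (pdx u (x, y)) x :=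
  ((hu.differentiable (by simp)) (x, y)).hasFDerivAt.comp_hasDerivAt x
    ((hasDerivAt_id x).prodMk (hasDerivAt_const x y))

lemma hasDerivAt_slice_snd (hu : ContDiff ℝ (⊤ : ℕ∞) u) (x y : ℝ) :
    HasDerivAt (fun s => u (x, s)) (pdy u (x, y)) y :=
  ((hu.differentiable (by simp)) (x, y)).hasFDerivAt.comp_hasDerivAt y
    ((hasDerivAt_const y x).prodMk (hasDerivAt_id y))

lemma pdx_mul (hu : ContDiff ℝ (⊤ : ℕ∞) u) (hv : ContDiff ℝ (⊤ : ℕ∞) v) (p : ℝ × ℝ) :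
    pdx (fun p => u p * v p) p = u p * pdx v p + v p * pdx u p := by
  simp [pdx, fderiv_fun_mul (hu.differentiable (by simp) p) (hv.differentiable (by simp) p)]

lemma pdy_mul (hu : ContDiff ℝ (⊤ : ℕ∞) u) (hv : ContDiff ℝ (⊤ : ℕ∞) v) (p : ℝ × ℝ) :
    pdy (fun p => u p * v p) p = u p * pdy v p + v p * pdy u p := by
  simp [pdy, fderiv_fun_mul (hu.differentiable (by simp) p) (hv.differentiable (by simp) p)]

lemma pdx_pdy_comm (hu : ContDiff ℝ (⊤ : ℕ∞) u) (p : ℝ × ℝ) :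
    pdx (pdy u) p = pdy (pdx u) p := by
  have hd : DifferentiableAt ℝ (fderiv ℝ u) p :=
    (hu.fderiv_right (m := (⊤ : ℕ∞)) (by simp)).differentiable (by simp) p
  have hsymm := hu.contDiffAt (x := p) |>.isSymmSndFDerivAt
    (by simpa using WithTop.coe_le_coe.2 (le_top : (2 : ℕ∞) ≤ ⊤)) (1, 0) (0, 1)
  have h (w : ℝ × ℝ) : fderiv ℝ (fun p => fderiv ℝ u p w) p
      = (fderiv ℝ (fderiv ℝ u) p).flip w := by
    simpa using fderiv_clm_apply hd (differentiableAt_const w)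
  change fderiv ℝ (fun p => fderiv ℝ u p (0, 1)) p (1, 0)
    = fderiv ℝ (fun p => fderiv ℝ u p (1, 0)) p (0, 1)
  rw [h, h]
  exact hsymm

lemma ContDiff.lap (hu : ContDiff ℝ (⊤ : ℕ∞) u) : ContDiff ℝ (⊤ : ℕ∞) (lap u) :=
  hu.pdx.pdx.add hu.pdy.pdy

lemma ContDiff.jac (hu : ContDiff ℝ (⊤ : ℕ∞) u) (hv : ContDiff ℝ (⊤ : ℕ∞) v) :
    ContDiff ℝ (⊤ : ℕ∞) (jac u v) :=
  (hu.pdx.mul hv.pdy).sub (hu.pdy.mul hv.pdx)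

end PartialDerivatives

/-! ### Integration over slices of a planar open set -/

section Slices

variable {D : Set (ℝ × ℝ)} {u v g : ℝ × ℝ → ℝ}

lemma Bornology.IsBounded.slice_fst (hDb : Bornology.IsBounded D) (y : ℝ) :
    Bornology.IsBounded ((fun x : ℝ => (x, y)) ⁻¹' D) :=
  hDb.image_fst.subset fun x hx => ⟨(x, y), hx, rfl⟩

lemma Bornology.IsBounded.slice_snd (hDb : Bornology.IsBounded D) (x : ℝ) :
    Bornology.IsBounded ((fun y : ℝ => (x, y)) ⁻¹' D) :=
  hDb.image_snd.subset fun y hy => ⟨(x, y), hy, rfl⟩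

lemma indicator_slice_fst (D : Set (ℝ × ℝ)) (g : ℝ × ℝ → ℝ) (y : ℝ) :
    (fun x => D.indicator g (x, y))
      = ((fun x : ℝ => (x, y)) ⁻¹' D).indicator fun x => g (x, y) := rfl

lemma indicator_slice_snd (D : Set (ℝ × ℝ)) (g : ℝ × ℝ → ℝ) (x : ℝ) :
    (fun y => D.indicator g (x, y))
      = ((fun y : ℝ => (x, y)) ⁻¹' D).indicator fun y => g (x, y) := rfl

lemma integral_indicator_slice_fst (hD : IsOpen D) (g : ℝ × ℝ → ℝ) (y : ℝ) :
    ∫ x, D.indicator g (x, y) = ∫ x in (fun x : ℝ => (x, y)) ⁻¹' D, g (x, y) := by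
  rw [indicator_slice_fst, integral_indicator (hD.preimage (by fun_prop)).measurableSet]

lemma integral_indicator_slice_snd (hD : IsOpen D) (g : ℝ × ℝ → ℝ) (x : ℝ) :
    ∫ y, D.indicator g (x, y) = ∫ y in (fun y : ℝ => (x, y)) ⁻¹' D, g (x, y) := by
  rw [indicator_slice_snd, integral_indicator (hD.preimage (by fun_prop)).measurableSet]

lemma integrable_indicator_prod (hD : IsOpen D) (hg : IntegrableOn g D) :
    Integrable (D.indicator g) ((volume : Measure ℝ).prod volume) := by
  rw [← Measure.volume_eq_prod]
  exact (integrable_indicator_iff hD.measurableSet).2 hg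

lemma setIntegral_eq_integral_slice_fst (hD : IsOpen D) (hg : IntegrableOn g D) :
    ∫ p in D, g p = ∫ y, ∫ x, D.indicator g (x, y) := by
  rw [← integral_indicator hD.measurableSet, Measure.volume_eq_prod,
    integral_prod_symm _ (integrable_indicator_prod hD hg)]

lemma setIntegral_eq_integral_slice_snd (hD : IsOpen D) (hg : IntegrableOn g D) :
    ∫ p in D, g p = ∫ x, ∫ y, D.indicator g (x, y) := by
  rw [← integral_indicator hD.measurableSet, Measure.volume_eq_prod,
    integral_prod _ (integrable_indicator_prod hD hg)]

lemma vanishes_on_frontier_slice_fst (h0 : ∀ p ∈ frontier D, u p = 0) (y : ℝ) :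
    ∀ x ∈ frontier ((fun x : ℝ => (x, y)) ⁻¹' D), u (x, y) = 0 :=
  fun _ hx => h0 _ ((by fun_prop : Continuous fun x : ℝ => (x, y)).frontier_preimage_subset D hx)

lemma vanishes_on_frontier_slice_snd (h0 : ∀ p ∈ frontier D, u p = 0) (x : ℝ) :
    ∀ y ∈ frontier ((fun y : ℝ => (x, y)) ⁻¹' D), u (x, y) = 0 :=
  fun _ hy => h0 _ ((by fun_prop : Continuous fun y : ℝ => (x, y)).frontier_preimage_subset D hy)

/-- Divergence theorem in the `x` direction; no regularity of `frontier D` is needed since `u`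
vanishes there. -/
lemma setIntegral_pdx_eq_zero (hD : IsOpen D) (hDb : Bornology.IsBounded D)
    (hu : ContDiff ℝ (⊤ : ℕ∞) u) (h0 : ∀ p ∈ frontier D, u p = 0) : ∫ p in D, pdx u p = 0 := by
  have hc := hu.pdx.continuous
  rw [setIntegral_eq_integral_slice_fst hD (hc.integrableOn_of_isBounded hDb)]
  refine integral_eq_zero_of_ae (Eventually.of_forall fun y => ?_)
  refine (integral_indicator_slice_fst hD _ y).trans ?_
  exact setIntegral_deriv_eq_zero_of_frontier (hD.preimage (by fun_prop)) (hDb.slice_fst y)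
    (hasDerivAt_slice_fst hu · y) (by fun_prop) (vanishes_on_frontier_slice_fst h0 y)

/-- Divergence theorem in the `y` direction; no regularity of `frontier D` is needed since `u`
vanishes there. -/
lemma setIntegral_pdy_eq_zero (hD : IsOpen D) (hDb : Bornology.IsBounded D)
    (hu : ContDiff ℝ (⊤ : ℕ∞) u) (h0 : ∀ p ∈ frontier D, u p = 0) : ∫ p in D, pdy u p = 0 := by
  have hc := hu.pdy.continuous
  rw [setIntegral_eq_integral_slice_snd hD (hc.integrableOn_of_isBounded hDb)]
  refine integral_eq_zero_of_ae (Eventually.of_forall fun x => ?_)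
  refine (integral_indicator_slice_snd hD _ x).trans ?_
  exact setIntegral_deriv_eq_zero_of_frontier (hD.preimage (by fun_prop)) (hDb.slice_snd x)
    (hasDerivAt_slice_snd hu x) (by fun_prop) (vanishes_on_frontier_slice_snd h0 x)

/-- Gagliardo–Nirenberg–Sobolev inequality in the plane, in terms of the two partials. -/
lemma four_mul_l2sq_le (hD : IsOpen D) (hDb : Bornology.IsBounded D)
    (hu : ContDiff ℝ (⊤ : ℕ∞) u) (h0 : ∀ p ∈ frontier D, u p = 0) :
    4 * l2sq D u ≤ (∫ p in D, |pdx u p|) * ∫ p in D, |pdy u p| := by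
  have hcx := hu.pdx.continuous
  have hcy := hu.pdy.continuous
  have hix : IntegrableOn (fun p => |pdx u p|) D := hcx.abs.integrableOn_of_isBounded hDb
  have hiy : IntegrableOn (fun p => |pdy u p|) D := hcy.abs.integrableOn_of_isBounded hDb
  set A : ℝ → ℝ := fun y => ∫ x, D.indicator (fun p => |pdx u p|) (x, y)
  set B : ℝ → ℝ := fun x => ∫ y, D.indicator (fun p => |pdy u p|) (x, y)
  have hA0 y : 0 ≤ A y :=
    integral_nonneg fun x => Set.indicator_nonneg (fun _ _ => abs_nonneg _) _
  have hB0 x : 0 ≤ B x :=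
    integral_nonneg fun y => Set.indicator_nonneg (fun _ _ => abs_nonneg _) _
  have hBA : Integrable (fun p : ℝ × ℝ => B p.1 * A p.2) := by
    rw [Measure.volume_eq_prod]
    exact (integrable_indicator_prod hD hiy).integral_prod_left.mul_prod
      (integrable_indicator_prod hD hix).integral_prod_right
  have hpt : ∀ p ∈ D, 4 * u p ^ 2 ≤ B p.1 * A p.2 := by
    rintro ⟨x, y⟩ hp
    have h1 : 2 * |u (x, y)| ≤ A y := by
      simp only [A]
      rw [integral_indicator_slice_fst hD]
      exact two_mul_abs_le_setIntegral_abs_deriv (hD.preimage (by fun_prop)) (hDb.slice_fst y)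
        (hasDerivAt_slice_fst hu · y) (by fun_prop) (vanishes_on_frontier_slice_fst h0 y) hp
    have h2 : 2 * |u (x, y)| ≤ B x := by
      simp only [B]
      rw [integral_indicator_slice_snd hD]
      exact two_mul_abs_le_setIntegral_abs_deriv (hD.preimage (by fun_prop)) (hDb.slice_snd x)
        (hasDerivAt_slice_snd hu x) (by fun_prop) (vanishes_on_frontier_slice_snd h0 x) hp
    calc 4 * u (x, y) ^ 2 = (2 * |u (x, y)|) * (2 * |u (x, y)|) := by
          rw [← sq_abs]; ring
      _ ≤ B x * A y := mul_le_mul h2 h1 (by positivity) (hB0 x)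
  have hcu := hu.continuous
  calc 4 * l2sq D u = ∫ p in D, 4 * u p ^ 2 := by rw [l2sq, integral_const_mul]
    _ ≤ ∫ p in D, B p.1 * A p.2 :=
        setIntegral_mono_on ((hcu.pow 2).const_mul 4 |>.integrableOn_of_isBounded hDb)
          hBA.integrableOn hD.measurableSet hpt
    _ ≤ ∫ p : ℝ × ℝ, B p.1 * A p.2 :=
        setIntegral_le_integral hBA
          (Eventually.of_forall fun p => mul_nonneg (hB0 p.1) (hA0 p.2))
    _ = (∫ p in D, |pdx u p|) * ∫ p in D, |pdy u p| := by
        rw [Measure.volume_eq_prod, integral_prod_mul B A, ← Measure.volume_eq_prod, mul_comm,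
          setIntegral_eq_integral_slice_fst hD hix, setIntegral_eq_integral_slice_snd hD hiy]

lemma sq_setIntegral_abs_le (hDb : Bornology.IsBounded D) (hg : Continuous g) :
    (∫ p in D, |g p|) ^ 2 ≤ area D * ∫ p in D, g p ^ 2 := by
  have hi1 : IntegrableOn (fun p => |g p|) D := hg.abs.integrableOn_of_isBounded hDb
  have hi2 : IntegrableOn (fun p => g p ^ 2) D := (hg.pow 2).integrableOn_of_isBounded hDb
  have hi3 (c : ℝ) : IntegrableOn (fun _ : ℝ × ℝ => c) D :=
    continuous_const.integrableOn_of_isBounded hDb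
  have h := discrim_le_zero (a := area D) (b := -2 * ∫ p in D, |g p|) (c := ∫ p in D, g p ^ 2)
    fun c => by
      have h0 : 0 ≤ ∫ p in D, ((c * c + (-2 * c) * |g p|) + g p ^ 2) :=
        integral_nonneg fun p => by
          have := sq_nonneg (c - |g p|)
          rw [sub_sq, sq_abs] at this
          simp only [Pi.zero_apply]
          linarith
      rw [integral_add (Integrable.fun_add (hi3 _) (hi1.const_mul _)) hi2, integral_add (hi3 _) (hi1.const_mul _),
        setIntegral_const, integral_const_mul] at h0
      simp only [smul_eq_mul, Measure.real] at h0
      unfold area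
      linarith
  rw [discrim] at h
  linarith

lemma integrableOn_gradsq (hDb : Bornology.IsBounded D) (hu : ContDiff ℝ (⊤ : ℕ∞) u) :
    IntegrableOn (fun p => pdx u p ^ 2) D ∧ IntegrableOn (fun p => pdy u p ^ 2) D :=
  ⟨(hu.pdx.continuous.pow 2).integrableOn_of_isBounded hDb,
    (hu.pdy.continuous.pow 2).integrableOn_of_isBounded hDb⟩

/-- Poincaré inequality with an explicit constant for functions vanishing on the boundary. -/
lemma eight_mul_l2sq_le (hD : IsOpen D) (hDb : Bornology.IsBounded D)
    (hu : ContDiff ℝ (⊤ : ℕ∞) u) (h0 : ∀ p ∈ frontier D, u p = 0) :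
    8 * l2sq D u ≤ area D * gradsq D u := by
  have h1 := four_mul_l2sq_le hD hDb hu h0
  have h2 := sq_setIntegral_abs_le hDb hu.pdx.continuous
  have h3 := sq_setIntegral_abs_le hDb hu.pdy.continuous
  obtain ⟨hx, hy⟩ := integrableOn_gradsq hDb hu
  rw [gradsq, integral_add hx hy]
  nlinarith [sq_nonneg ((∫ p in D, |pdx u p|) - ∫ p in D, |pdy u p|)]

/-- Green's first identity for a function vanishing on the boundary. -/
lemma setIntegral_mul_lap (hD : IsOpen D) (hDb : Bornology.IsBounded D)
    (hu : ContDiff ℝ (⊤ : ℕ∞) u) (h0 : ∀ p ∈ frontier D, u p = 0) :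
    ∫ p in D, u p * lap u p = -gradsq D u := by
  have hx := setIntegral_pdx_eq_zero hD hDb (hu.mul hu.pdx) fun p hp => by simp [h0 p hp]
  have hy := setIntegral_pdy_eq_zero hD hDb (hu.mul hu.pdy) fun p hp => by simp [h0 p hp]
  have hix : IntegrableOn (pdx fun p => u p * pdx u p) D :=
    (hu.mul hu.pdx).pdx.continuous.integrableOn_of_isBounded hDb
  have hiy : IntegrableOn (pdy fun p => u p * pdy u p) D :=
    (hu.mul hu.pdy).pdy.continuous.integrableOn_of_isBounded hDb
  have hig := Integrable.fun_add (integrableOn_gradsq hDb hu).1 (integrableOn_gradsq hDb hu).2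
  have h : (fun p => u p * lap u p) = fun p =>
      ((pdx fun p => u p * pdx u p) p + (pdy fun p => u p * pdy u p) p)
        - (pdx u p ^ 2 + pdy u p ^ 2) := by
    ext p
    rw [pdx_mul hu hu.pdx, pdy_mul hu hu.pdy, lap]
    ring
  rw [h, integral_sub (Integrable.fun_add hix hiy) hig, integral_add hix hiy, hx, hy, gradsq]
  ring

lemma setIntegral_mul_jac_eq_zero (hD : IsOpen D) (hDb : Bornology.IsBounded D)
    (hu : ContDiff ℝ (⊤ : ℕ∞) u) (hv : ContDiff ℝ (⊤ : ℕ∞) v)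
    (h0 : ∀ p ∈ frontier D, v p = 0) : ∫ p in D, v p * jac u v p = 0 := by
  have hvx := (hv.mul hv).mul hu.pdx
  have hvy := (hv.mul hv).mul hu.pdy
  have hx := setIntegral_pdx_eq_zero hD hDb hvy fun p hp => by simp [h0 p hp]
  have hy := setIntegral_pdy_eq_zero hD hDb hvx fun p hp => by simp [h0 p hp]
  have h : (fun p => v p * jac u v p) = fun p => (1 / 2) *
      ((pdy fun p => v p * v p * pdx u p) p - (pdx fun p => v p * v p * pdy u p) p) := by
    ext p
    rw [pdy_mul (hv.mul hv) hu.pdx, pdx_mul (hv.mul hv) hu.pdy, pdx_mul hv hv, pdy_mul hv hv,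
      pdx_pdy_comm hu, jac]
    ring
  rw [h, integral_const_mul, integral_sub (hvx.pdy.continuous.integrableOn_of_isBounded hDb)
    (hvy.pdx.continuous.integrableOn_of_isBounded hDb), hx, hy]
  ring

/-- Elliptic estimate for the Dirichlet problem `Δu = v`. -/
lemma gradsq_le_of_lap_eq (hD : IsOpen D) (hDb : Bornology.IsBounded D) (hA : 0 < area D)
    (hu : ContDiff ℝ (⊤ : ℕ∞) u) (hv : Continuous v) (h0 : ∀ p ∈ frontier D, u p = 0)
    (hlap : ∀ p ∈ D, v p = lap u p) : gradsq D u ≤ area D / π * l2sq D v := by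
  have hpi := pi_pos
  set c := area D / π with hc
  have hcpos : 0 < c := div_pos hA hpi
  have hP := eight_mul_l2sq_le hD hDb hu h0
  have hG0 : 0 ≤ gradsq D u := integral_nonneg fun p => by positivity
  have hiu : IntegrableOn (fun p => u p ^ 2) D :=
    (hu.continuous.pow 2).integrableOn_of_isBounded hDb
  have hiv : IntegrableOn (fun p => v p ^ 2) D := (hv.pow 2).integrableOn_of_isBounded hDb
  have hiL : IntegrableOn (fun p => u p * lap u p) D :=
    (hu.mul hu.lap).continuous.integrableOn_of_isBounded hDb
  have h : ∫ p in D, -2 * c * (u p * lap u p) ≤ ∫ p in D, (c ^ 2 * v p ^ 2 + u p ^ 2) :=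
    setIntegral_mono_on (hiL.const_mul _) ((hiv.const_mul _).add hiu) hD.measurableSet
      fun p hp => by rw [← hlap p hp]; nlinarith [sq_nonneg (c * v p + u p)]
  rw [integral_const_mul, setIntegral_mul_lap hD hDb hu h0, integral_add (hiv.const_mul _) hiu,
    integral_const_mul, ← l2sq, ← l2sq] at h
  have hAc : area D = π * c := by rw [hc]; field_simp
  rw [hAc] at hP
  have h4 : π * c * gradsq D u ≤ 4 * c * gradsq D u :=
    mul_le_mul_of_nonneg_right (mul_le_mul_of_nonneg_right pi_le_four hcpos.le) hG0
  refine le_of_mul_le_mul_left ?_ hcpos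
  nlinarith [mul_nonneg hcpos.le hG0]

end Slices

/-! ### Evolution of the enstrophy -/

section Enstrophy

variable {D : Set (ℝ × ℝ)} {q ψ f : ℝ → ℝ × ℝ → ℝ} {β ν r : ℝ}

lemma SmoothField.contDiff (hq : SmoothField q) (t : ℝ) : ContDiff ℝ (⊤ : ℕ∞) (q t) :=
  ContDiff.comp (g := Function.uncurry q) hq (contDiff_const.prodMk contDiff_id)

lemma SmoothField.hasDerivAt (hq : SmoothField q) (t : ℝ) (p : ℝ × ℝ) :
    HasDerivAt (fun s => q s p) (fderiv ℝ (Function.uncurry q) (t, p) (1, 0)) t :=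
  HasFDerivAt.comp_hasDerivAt (l := Function.uncurry q) t
    ((ContDiff.differentiable hq (by simp)) (t, p)).hasFDerivAt
    ((hasDerivAt_id t).prodMk (hasDerivAt_const t p))

lemma SmoothField.continuous_deriv (hq : SmoothField q) :
    Continuous fun z : ℝ × ℝ × ℝ => deriv (fun s => q s z.2) z.1 := by
  have h : (fun z : ℝ × ℝ × ℝ => deriv (fun s => q s z.2) z.1)
      = fun z => fderiv ℝ (Function.uncurry q) z (1, 0) :=
    funext fun z => (hq.hasDerivAt z.1 z.2).deriv
  rw [h]
  exact (ContDiff.continuous_fderiv hq (by simp)).clm_apply continuous_const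

lemma SmoothField.hasDerivAt_l2sq (hq : SmoothField q) (hD : IsOpen D)
    (hDb : Bornology.IsBounded D) (t : ℝ) :
    HasDerivAt (fun s => l2sq D (q s))
      (∫ p in D, 2 * (q t p * deriv (fun s => q s p) t)) t := by
  have hqc : Continuous fun z : ℝ × ℝ × ℝ => q z.1 z.2 := ContDiff.continuous hq
  have hF' : Continuous fun z : ℝ × ℝ × ℝ => 2 * (q z.1 z.2 * deriv (fun s => q s z.2) z.1) :=
    (hqc.mul hq.continuous_deriv).const_mul 2
  obtain ⟨C, hC⟩ := ((isCompact_Icc (a := t - 1) (b := t + 1)).prod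
    hDb.isCompact_closure).exists_bound_of_continuousOn hF'.continuousOn
  have hqt s : Continuous (q s) := (hq.contDiff s).continuous
  have h_int : IntegrableOn (fun p => q t p ^ 2) D :=
    ((hqt t).pow 2).integrableOn_of_isBounded hDb
  refine (hasDerivAt_integral_of_dominated_loc_of_deriv_le (μ := volume.restrict D)
    (bound := fun _ => C)
    (F := fun s p => q s p ^ 2) (F' := fun s p => 2 * (q s p * deriv (fun s => q s p) s))
    (Icc_mem_nhds (sub_one_lt t) (lt_add_one t))
    (Eventually.of_forall fun s => ((hqt s).pow 2).aestronglyMeasurable)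
    h_int
    (hF'.comp (Continuous.prodMk_right t)).aestronglyMeasurable ?_
    (continuous_const.integrableOn_of_isBounded hDb) ?_).2
  · filter_upwards [ae_restrict_mem hD.measurableSet] with p hp s hs
    exact hC (s, p) ⟨hs, subset_closure hp⟩
  · refine Eventually.of_forall fun p s _ => ?_
    have h := (hq.hasDerivAt s p).differentiableAt.hasDerivAt.fun_pow 2
    refine h.congr_deriv ?_
    push_cast
    ring

lemma SolvesBVE.enstrophy_rate_le (hD : IsOpen D) (hDb : Bornology.IsBounded D)
    (hA : 0 < area D) (hν : 0 < ν) (hr : 0 < r) (hq : SmoothField q) (hψ : SmoothField ψ)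
    (hf : MeanSquareIntegrable D f) (hsol : SolvesBVE D β ν r q ψ f (fun _ _ => 0))
    {t : ℝ} (ht : 0 ≤ t) :
    ∫ p in D, 2 * (q t p * deriv (fun s => q s p) t)
      ≤ -2 * alphaConst D β ν r * l2sq D (q t) + 1 / r * l2sq D (f t) := by
  obtain ⟨hlap, hbdry, hpde⟩ := hsol
  have hQ := hq.contDiff t
  have hP := hψ.contDiff t
  have hQ0 : ∀ p ∈ frontier D, q t p = 0 := fun p hp => (hbdry t ht p hp).1
  have hP0 : ∀ p ∈ frontier D, ψ t p = 0 := fun p hp => (hbdry t ht p hp).2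
  have hfi : IntegrableOn (fun p => f t p ^ 2) D := hf.1 t ht
  have hqi : IntegrableOn (fun p => q t p ^ 2) D :=
    (hQ.continuous.pow 2).integrableOn_of_isBounded hDb
  have hLi : IntegrableOn (fun p => q t p * lap (q t) p) D :=
    (hQ.mul hQ.lap).continuous.integrableOn_of_isBounded hDb
  have hJi : IntegrableOn (fun p => q t p * jac (ψ t) (q t) p) D :=
    (hQ.mul (hP.jac hQ)).continuous.integrableOn_of_isBounded hDb
  have hgi : IntegrableOn (fun p => pdx (ψ t) p ^ 2 + pdy (ψ t) p ^ 2) D :=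
    Integrable.fun_add (integrableOn_gradsq hDb hP).1 (integrableOn_gradsq hDb hP).2
  have hti : IntegrableOn (fun p => 2 * (q t p * deriv (fun s => q s p) t)) D :=
    ((hQ.continuous.mul (hq.continuous_deriv.comp
      (Continuous.prodMk_right t))).const_mul 2).integrableOn_of_isBounded hDb
  have h1 := (hfi.const_mul (1 / r)).fun_add (hLi.const_mul (2 * ν))
  have h2 := h1.fun_add (hqi.const_mul (|β| - r))
  have h3 := h2.fun_add (hgi.const_mul |β|)
  have hpt : ∀ p ∈ D, 2 * (q t p * deriv (fun s => q s p) t) ≤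
      1 / r * f t p ^ 2 + 2 * ν * (q t p * lap (q t) p) + (|β| - r) * q t p ^ 2
        + |β| * (pdx (ψ t) p ^ 2 + pdy (ψ t) p ^ 2) + (-2) * (q t p * jac (ψ t) (q t) p) := by
    intro p hp
    have hd : deriv (fun s => q s p) t = f t p + ν * lap (q t) p - r * q t p
        - jac (ψ t) (q t) p - β * pdx (ψ t) p := by linarith [hpde t ht p hp]
    have hyoung : 2 * (q t p * f t p) ≤ r * q t p ^ 2 + 1 / r * f t p ^ 2 := by
      have h : r * q t p ^ 2 + 1 / r * f t p ^ 2 - 2 * (q t p * f t p)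
          = r * (q t p - f t p / r) ^ 2 := by field_simp; ring
      linarith [mul_nonneg hr.le (sq_nonneg (q t p - f t p / r))]
    have hbeta : -(2 * β * (q t p * pdx (ψ t) p))
        ≤ |β| * (q t p ^ 2 + (pdx (ψ t) p ^ 2 + pdy (ψ t) p ^ 2)) := by
      have h : |2 * (q t p * pdx (ψ t) p)| ≤ q t p ^ 2 + (pdx (ψ t) p ^ 2 + pdy (ψ t) p ^ 2) := by
        rw [abs_le]
        constructor <;> nlinarith [sq_nonneg (q t p + pdx (ψ t) p),
          sq_nonneg (q t p - pdx (ψ t) p), sq_nonneg (pdy (ψ t) p)]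
      calc -(2 * β * (q t p * pdx (ψ t) p)) ≤ |β * (2 * (q t p * pdx (ψ t) p))| := by
            rw [← abs_neg]
            exact (le_of_eq (by ring)).trans (le_abs_self _)
        _ ≤ _ := by
            rw [abs_mul]
            exact mul_le_mul_of_nonneg_left h (abs_nonneg β)
    rw [hd]
    linarith
  have hmono := setIntegral_mono_on hti (h3.fun_add (hJi.const_mul (-2))) hD.measurableSet hpt
  rw [integral_add h3 (hJi.const_mul (-2)), integral_add h2 (hgi.const_mul _),
    integral_add h1 (hqi.const_mul _), integral_add (hfi.const_mul _) (hLi.const_mul _),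
    integral_const_mul, integral_const_mul, integral_const_mul, integral_const_mul,
    integral_const_mul, integral_const_mul, setIntegral_mul_lap hD hDb hQ hQ0,
    setIntegral_mul_jac_eq_zero hD hDb hP hQ hQ0, ← l2sq, ← l2sq, ← gradsq] at hmono
  have hE0 : 0 ≤ l2sq D (q t) := integral_nonneg fun p => sq_nonneg _
  have hpoincare : π / area D * l2sq D (q t) ≤ gradsq D (q t) := by
    rw [div_mul_eq_mul_div, div_le_iff₀ hA]
    nlinarith [eight_mul_l2sq_le hD hDb hQ hQ0, mul_le_mul_of_nonneg_right pi_le_four hE0]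
  have hell := mul_le_mul_of_nonneg_left
    (gradsq_le_of_lap_eq hD hDb hA hP hQ.continuous hP0 (hlap t ht)) (abs_nonneg β)
  have hvisc := mul_le_mul_of_nonneg_left hpoincare hν.le
  have halpha : -2 * alphaConst D β ν r * l2sq D (q t) = -r * l2sq D (q t)
      - 2 * (ν * (π / area D * l2sq D (q t)))
      + |β| * (area D / π * l2sq D (q t)) + |β| * l2sq D (q t) := by
    rw [alphaConst]
    ring
  rw [halpha, integral_const_mul]
  linarith

end Enstrophy

/-- Lemma 1, first enstrophy estimate.
If `q` is a (sufficiently smooth) solution of the barotropic vorticity equation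
`q_t + J(ψ,q) + βψ_x = f + νΔq - rq`, `q = Δψ`, with zero boundary conditions
on `∂D` and initial condition `q(·,·,0) = q₀`, then for all `t ≥ 0`,
`‖q(t)‖² ≤ ‖q₀‖² e^{-2αt} + (1/r) ∫₀ᵗ ‖f(s)‖² e^{2α(s-t)} ds`,
where `α = r/2 + πν/|D| - (|β|/2)(|D|/π + 1)`. -/
theorem enstrophy_decay_estimate
    (D : Set (ℝ × ℝ)) (hD : IsOpen D) (hDb : Bornology.IsBounded D)
    (β ν r : ℝ) (hν : 0 < ν) (hr : 0 < r)
    (q ψ f : ℝ → ℝ × ℝ → ℝ) (q₀ : ℝ × ℝ → ℝ)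
    (hq : SmoothField q) (hψ : SmoothField ψ)
    (hf : MeanSquareIntegrable D f)
    (hsol : SolvesBVE D β ν r q ψ f (fun _ _ => 0))
    (hinit : q 0 = q₀) :
    ∀ t, 0 ≤ t →
      l2sq D (q t) ≤
        l2sq D q₀ * Real.exp (-2 * alphaConst D β ν r * t)
          + (1 / r) * ∫ s in (0:ℝ)..t,
              l2sq D (f s) * Real.exp (2 * alphaConst D β ν r * (s - t)) := by
  subst hinit
  intro t ht
  rcases D.eq_empty_or_nonempty with rfl | hne
  · simp [l2sq]
  have hA : 0 < area D :=
    ENNReal.toReal_pos (hD.measure_pos volume hne).ne' hDb.measure_lt_top.ne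
  rcases ht.eq_or_lt with rfl | htpos
  · simp
  set a := alphaConst D β ν r
  have hexp (s : ℝ) : HasDerivAt (fun s => Real.exp (2 * a * s)) (Real.exp (2 * a * s) * (2 * a)) s :=
    by simpa using ((hasDerivAt_id s).const_mul (2 * a)).exp
  have hderiv (s : ℝ) := (hq.hasDerivAt_l2sq hD hDb s).mul (hexp s)
  have h_int : IntervalIntegrable (fun s => 1 / r * (l2sq D (f s) * Real.exp (2 * a * s)))
      volume 0 t :=
    ((hf.2 t htpos).mul_continuousOn (by fun_prop)).const_mul _
  have hmain := intervalIntegral.sub_le_integral_of_hasDeriv_right_of_le ht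
    (fun s _ => (hderiv s).continuousAt.continuousWithinAt)
    (fun s _ => (hderiv s).hasDerivWithinAt)
    ((intervalIntegrable_iff_integrableOn_Icc_of_le ht).1 h_int) fun s hs => by
      have h := mul_le_mul_of_nonneg_right
        (hsol.enstrophy_rate_le hD hDb hA hν hr hq hψ hf hs.1.le) (Real.exp_pos (2 * a * s)).le
      linarith
  simp only [Pi.mul_apply, mul_zero, Real.exp_zero, mul_one,
    intervalIntegral.integral_const_mul] at hmain
  have hfactor : ∫ s in (0:ℝ)..t, l2sq D (f s) * Real.exp (2 * a * (s - t))
      = (∫ s in (0:ℝ)..t, l2sq D (f s) * Real.exp (2 * a * s)) * Real.exp (-2 * a * t) := by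
    rw [← intervalIntegral.integral_mul_const]
    congr 1 with s
    rw [mul_assoc (l2sq D (f s)), ← Real.exp_add]
    ring_nf
  have hcancel : Real.exp (2 * a * t) * Real.exp (-2 * a * t) = 1 := by
    rw [← Real.exp_add, ← Real.exp_zero]
    ring_nf
  rw [hfactor]
  have h := mul_le_mul_of_nonneg_right hmain (Real.exp_pos (-2 * a * t)).le
  rw [sub_mul, mul_assoc, hcancel] at h
  linarith
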